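/- Let $0 < a < b$, $s \in (0,1)$, and let $M > 0$ satisfy $s(1-s)u^{s-2} \le M$ for all $u \in [a,b]$. Then for every $x \in [a,b]$: $\left| L_s^s(a,b) - x^s + s\,(x - A(a,b))\,x^{s-1} \right| \le 3M \cdot \frac{s^2 + 3s + 4}{(s+1)(s+2)(s+3)} \Big[ \frac{(b-a)^2}{24} + \frac{1}{2}\big(x - A(a,b)\big)^2 \Big] \le \frac{M(b-a)^2}{2} \cdot \frac{s^2 + 3s + 4}{(s+1)(s+2)(s+3)}$. In particular, taking $x = A(a,b)$: $\left| L_s^s(a,b) - A(a,b)^s \right| \le \frac{M(b-a)^2}{8} \cdot \frac{s^2 + 3s + 4}{(s+1)(s+2)(s+3)}$. -/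

import Mathlib

open MeasureTheory Set intervalIntegral

/-!
Subtracting the first-order Taylor polynomial of `f` at `x` and averaging over `[a, b]` leaves an
error at most the average of `M / 2 * (t - x) ^ 2`, which is
`M * ((b - a) ^ 2 / 24 + (x - (a + b) / 2) ^ 2 / 2)`. For `f t = t ^ s` this is already sharper than
the claim, whose extra factor `3 * (s ^ 2 + 3 * s + 4) / ((s + 1) * (s + 2) * (s + 3))` is at
least `1` for `-1 < s ≤ 1`.
-/

section Taylor

variable {E F : Type*} [NormedAddCommGroup E] [NormedSpace ℝ E]
  [NormedAddCommGroup F] [NormedSpace ℝ F]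

theorem norm_image_sub_sub_fderiv_le_of_starConvex {f : E → F} {f' : E → E →L[ℝ] F} {s : Set E}
    {x y : E} {K : ℝ} (hs : StarConvex ℝ x s) (hf : ∀ z ∈ s, HasFDerivWithinAt f (f' z) s z)
    (hf' : ∀ z ∈ s, ‖f' z - f' x‖ ≤ K * ‖z - x‖) (hy : y ∈ s) :
    ‖f y - f x - f' x (y - x)‖ ≤ K / 2 * ‖y - x‖ ^ 2 := by
  let c : ℝ → E := fun r ↦ x + r • (y - x)
  let remainder : ℝ → F := fun r ↦ f (c r) - f x - r • f' x (y - x)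
  have hc_mem : MapsTo c (Icc 0 1) s := fun r hr ↦ hs.add_smul_sub_mem hy hr.1 hr.2
  have hc (r : ℝ) : HasDerivAt c (y - x) r :=
    (((hasDerivAt_id r).smul_const (y - x)).const_add x).congr_deriv (one_smul ℝ _)
  have h_deriv : ∀ r ∈ Icc (0 : ℝ) 1,
      HasDerivWithinAt remainder ((f' (c r) - f' x) (y - x)) (Icc 0 1) r := fun r hr ↦ by
    have h_comp := (hf _ (hc_mem hr)).comp_hasDerivWithinAt r (hc r).hasDerivWithinAt hc_mem
    exact ((h_comp.sub_const (f x)).sub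
      ((hasDerivAt_id r).smul_const (f' x (y - x))).hasDerivWithinAt).congr_deriv (by simp)
  have h_bound : ∀ r ∈ Ico (0 : ℝ) 1,
      ‖(f' (c r) - f' x) (y - x)‖ ≤ K * ‖y - x‖ ^ 2 * r := fun r hr ↦ calc
    _ ≤ ‖f' (c r) - f' x‖ * ‖y - x‖ := ContinuousLinearMap.le_opNorm _ _
    _ ≤ K * ‖c r - x‖ * ‖y - x‖ := by gcongr; exact hf' _ (hc_mem (Ico_subset_Icc_self hr))
    _ = K * ‖y - x‖ ^ 2 * r := by
      simp only [c, add_sub_cancel_left, norm_smul, Real.norm_of_nonneg hr.1]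
      ring
  have h_majorant (r : ℝ) :
      HasDerivAt (fun r ↦ K / 2 * ‖y - x‖ ^ 2 * r ^ 2) (K * ‖y - x‖ ^ 2 * r) r :=
    ((hasDerivAt_pow 2 r).const_mul _).congr_deriv (by ring)
  have h_remainder := image_norm_le_of_norm_deriv_right_le_deriv_boundary
    (fun r hr ↦ (h_deriv r hr).continuousWithinAt)
    (fun r hr ↦ (h_deriv r (Ico_subset_Icc_self hr)).mono_of_mem_nhdsWithin
      (Icc_mem_nhdsGE_of_mem hr))
    (by simp [remainder, c]) h_majorant h_bound (right_mem_Icc.2 zero_le_one)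
  simpa [remainder, c] using h_remainder

theorem norm_image_sub_sub_smul_deriv_le_of_norm_deriv2_le {f f' f'' : ℝ → F} {s : Set ℝ}
    {x y M : ℝ} (hs : Convex ℝ s) (hf : ∀ t ∈ s, HasDerivWithinAt f (f' t) s t)
    (hf' : ∀ t ∈ s, HasDerivWithinAt f' (f'' t) s t) (hM : ∀ t ∈ s, ‖f'' t‖ ≤ M)
    (hx : x ∈ s) (hy : y ∈ s) :
    ‖f y - f x - (y - x) • f' x‖ ≤ M / 2 * (y - x) ^ 2 := by
  have h_lipschitz : ∀ t ∈ s, ‖ContinuousLinearMap.toSpanSingleton ℝ (f' t) -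
      ContinuousLinearMap.toSpanSingleton ℝ (f' x)‖ ≤ M * ‖t - x‖ := fun t ht ↦ by
    have h_isometry := (ContinuousLinearMap.toSpanSingletonLIE ℝ F).dist_map (f' t) (f' x)
    rw [dist_eq_norm, dist_eq_norm] at h_isometry
    exact h_isometry.trans_le (hs.norm_image_sub_le_of_norm_hasDerivWithin_le hf' hM hx ht)
  simpa using norm_image_sub_sub_fderiv_le_of_starConvex (hs.starConvex hx)
    (fun t ht ↦ (hf t ht).hasFDerivWithinAt) h_lipschitz hy

end Taylor

section Ostrowski

variable {E : Type*} [NormedAddCommGroup E] [NormedSpace ℝ E] {a b : ℝ}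

theorem norm_intervalAverage_le_of_norm_le {f : ℝ → E} {g : ℝ → ℝ} (hab : a ≤ b)
    (hfg : ∀ t ∈ Icc a b, ‖f t‖ ≤ g t) (hg : IntervalIntegrable g volume a b) :
    ‖⨍ t in a..b, f t‖ ≤ ⨍ t in a..b, g t := by
  rw [interval_average_eq, interval_average_eq, norm_smul, norm_inv,
    Real.norm_of_nonneg (sub_nonneg.2 hab), smul_eq_mul]
  gcongr
  exact intervalIntegral.norm_integral_le_of_norm_le hab
    (.of_forall fun t ht ↦ hfg t (Ioc_subset_Icc_self ht)) hg

theorem intervalAverage_sub_sub_smul [CompleteSpace E] {f : ℝ → E}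
    (hf : IntervalIntegrable f volume a b) (hab : a ≠ b) (x : ℝ) (v w : E) :
    ⨍ t in a..b, (f t - v - (t - x) • w) =
      (⨍ t in a..b, f t) - v + (x - (a + b) / 2) • w := by
  have hba : b - a ≠ 0 := sub_ne_zero.2 hab.symm
  have h_integral : ∫ t in a..b, (f t - v - (t - x) • w) =
      (∫ t in a..b, f t) - (b - a) • v - ((b - a) * ((a + b) / 2 - x)) • w := by
    have h_linear : ∫ t in a..b, (t - x) = (b - a) * ((a + b) / 2 - x) := by
      rw [intervalIntegral.integral_sub (by simp) (by simp), integral_id,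
        intervalIntegral.integral_const, smul_eq_mul]
      ring
    rw [intervalIntegral.integral_sub (hf.sub (by simp))
        (Continuous.intervalIntegrable (by fun_prop) a b),
      intervalIntegral.integral_sub hf (by simp), intervalIntegral.integral_const,
      intervalIntegral.integral_smul_const, h_linear]
  rw [interval_average_eq, interval_average_eq, h_integral, smul_sub, smul_sub,
    inv_smul_smul₀ hba, smul_smul, inv_mul_cancel_left₀ hba]
  module

theorem intervalAverage_sub_sq (hab : a ≠ b) (x : ℝ) :
    ⨍ t in a..b, (t - x) ^ 2 = (b - a) ^ 2 / 12 + (x - (a + b) / 2) ^ 2 := by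
  have hba : b - a ≠ 0 := sub_ne_zero.2 hab.symm
  rw [interval_average_eq_div, intervalIntegral.integral_comp_sub_right (fun t ↦ t ^ 2) x,
    integral_pow, div_eq_iff hba]
  ring

theorem norm_intervalAverage_sub_add_smul_deriv_le [CompleteSpace E] {f f' f'' : ℝ → E} {x M : ℝ}
    (hab : a < b) (hf : ∀ t ∈ Icc a b, HasDerivWithinAt f (f' t) (Icc a b) t)
    (hf' : ∀ t ∈ Icc a b, HasDerivWithinAt f' (f'' t) (Icc a b) t)
    (hM : ∀ t ∈ Icc a b, ‖f'' t‖ ≤ M) (hx : x ∈ Icc a b) :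
    ‖(⨍ t in a..b, f t) - f x + (x - (a + b) / 2) • f' x‖ ≤
      M * ((b - a) ^ 2 / 24 + 1 / 2 * (x - (a + b) / 2) ^ 2) := by
  have hf_int : IntervalIntegrable f volume a b :=
    ContinuousOn.intervalIntegrable_of_Icc hab.le fun t ht ↦ (hf t ht).continuousWithinAt
  calc
    _ = ‖⨍ t in a..b, (f t - f x - (t - x) • f' x)‖ := by
      rw [intervalAverage_sub_sub_smul hf_int hab.ne]
    _ ≤ ⨍ t in a..b, M / 2 * (t - x) ^ 2 :=
      norm_intervalAverage_le_of_norm_le hab.le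
        (fun t ht ↦ norm_image_sub_sub_smul_deriv_le_of_norm_deriv2_le (convex_Icc a b)
          hf hf' hM hx ht)
        (Continuous.intervalIntegrable (by fun_prop) a b)
    _ = M / 2 * ⨍ t in a..b, (t - x) ^ 2 := integral_const_mul _ _
    _ = M * ((b - a) ^ 2 / 24 + 1 / 2 * (x - (a + b) / 2) ^ 2) := by
      rw [intervalAverage_sub_sq hab.ne]
      ring

end Ostrowski

section Power

variable {a b s x M : ℝ}

theorem intervalAverage_rpow (h : -1 < s ∨ s ≠ -1 ∧ (0 : ℝ) ∉ uIcc a b) :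
    ⨍ t in a..b, t ^ s = (b ^ (s + 1) - a ^ (s + 1)) / ((s + 1) * (b - a)) := by
  rw [interval_average_eq_div, integral_rpow h, div_div]

theorem abs_intervalAverage_rpow_sub_add_le (ha : 0 < a) (hab : a < b)
    (hM : ∀ u ∈ Icc a b, |s * (1 - s)| * u ^ (s - 2) ≤ M) (hx : x ∈ Icc a b) :
    |(⨍ t in a..b, t ^ s) - x ^ s + s * (x - (a + b) / 2) * x ^ (s - 1)| ≤
      M * ((b - a) ^ 2 / 24 + 1 / 2 * (x - (a + b) / 2) ^ 2) := by
  have h_pos : ∀ t ∈ Icc a b, 0 < t := fun t ht ↦ ha.trans_le ht.1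
  have h_deriv : ∀ t ∈ Icc a b,
      HasDerivWithinAt (fun t ↦ t ^ s) (s * t ^ (s - 1)) (Icc a b) t := fun t ht ↦
    (Real.hasDerivAt_rpow_const (.inl (h_pos t ht).ne')).hasDerivWithinAt
  have h_deriv2 : ∀ t ∈ Icc a b, HasDerivWithinAt (fun t ↦ s * t ^ (s - 1))
      (s * ((s - 1) * t ^ (s - 1 - 1))) (Icc a b) t := fun t ht ↦
    ((Real.hasDerivAt_rpow_const (.inl (h_pos t ht).ne')).const_mul s).hasDerivWithinAt
  have h_bound : ∀ t ∈ Icc a b, ‖s * ((s - 1) * t ^ (s - 1 - 1))‖ ≤ M := fun t ht ↦ calc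
    _ = |s * (1 - s)| * t ^ (s - 2) := by
      rw [← mul_assoc, norm_mul, Real.norm_of_nonneg (Real.rpow_nonneg (h_pos t ht).le _),
        Real.norm_eq_abs, abs_mul, abs_sub_comm s, ← abs_mul]
      ring_nf
    _ ≤ M := hM t ht
  have h_ostrowski := norm_intervalAverage_sub_add_smul_deriv_le hab h_deriv h_deriv2 h_bound hx
  rwa [smul_eq_mul, mul_left_comm, ← mul_assoc] at h_ostrowski

theorem one_le_three_mul_sq_add_div (hs : s ∈ Ioc (-1) 1) :
    1 ≤ 3 * ((s ^ 2 + 3 * s + 4) / ((s + 1) * (s + 2) * (s + 3))) := by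
  obtain ⟨hs₁, hs₂⟩ := hs
  have h₁ : 0 < s + 1 := by linarith
  have h₂ : 0 < s + 2 := by linarith
  have h₃ : 0 < s + 3 := by linarith
  have h_factor : 0 ≤ (1 - s) * ((s + 2) ^ 2 + 2) :=
    mul_nonneg (sub_nonneg.2 hs₂) (by positivity)
  rw [← mul_div_assoc, one_le_div (by positivity)]
  linarith

theorem sq_sub_midpoint_le (hx : x ∈ Icc a b) : (x - (a + b) / 2) ^ 2 ≤ (b - a) ^ 2 / 4 := by
  have h_mul : 0 ≤ (x - a) * (b - x) := mul_nonneg (sub_nonneg.2 hx.1) (sub_nonneg.2 hx.2)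
  linarith

end Power

theorem stmt15_general {a b s M : ℝ} (ha : 0 < a) (hab : a < b) (hs : s ∈ Ioc (-1) 1)
    (hbd : ∀ u ∈ Icc a b, |s * (1 - s)| * u ^ (s - 2) ≤ M) :
    (∀ x ∈ Icc a b,
        |(b ^ (s + 1) - a ^ (s + 1)) / ((s + 1) * (b - a)) - x ^ s
            + s * (x - (a + b) / 2) * x ^ (s - 1)|
          ≤ 3 * M * ((s ^ 2 + 3 * s + 4) / ((s + 1) * (s + 2) * (s + 3))) *
              ((b - a) ^ 2 / 24 + 1 / 2 * (x - (a + b) / 2) ^ 2)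
        ∧ 3 * M * ((s ^ 2 + 3 * s + 4) / ((s + 1) * (s + 2) * (s + 3))) *
              ((b - a) ^ 2 / 24 + 1 / 2 * (x - (a + b) / 2) ^ 2)
          ≤ M * (b - a) ^ 2 / 2 * ((s ^ 2 + 3 * s + 4) / ((s + 1) * (s + 2) * (s + 3))))
      ∧ |(b ^ (s + 1) - a ^ (s + 1)) / ((s + 1) * (b - a)) - ((a + b) / 2) ^ s|
          ≤ M * (b - a) ^ 2 / 8 * ((s ^ 2 + 3 * s + 4) / ((s + 1) * (s + 2) * (s + 3))) := by
  have hC := one_le_three_mul_sq_add_div hs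
  set C := (s ^ 2 + 3 * s + 4) / ((s + 1) * (s + 2) * (s + 3))
  have hM : 0 ≤ M := (by positivity : 0 ≤ |s * (1 - s)| * a ^ (s - 2)).trans
    (hbd a (left_mem_Icc.2 hab.le))
  have h_le : M ≤ 3 * M * C := (le_mul_of_one_le_right hM hC).trans_eq (by ring)
  rw [← intervalAverage_rpow (.inl hs.1)]
  have h_general_point : ∀ x ∈ Icc a b,
      |(⨍ t in a..b, t ^ s) - x ^ s + s * (x - (a + b) / 2) * x ^ (s - 1)| ≤
        3 * M * C * ((b - a) ^ 2 / 24 + 1 / 2 * (x - (a + b) / 2) ^ 2) := fun x hx ↦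
    (abs_intervalAverage_rpow_sub_add_le ha hab hbd hx).trans (by gcongr)
  refine ⟨fun x hx ↦ ⟨h_general_point x hx, ?_⟩, ?_⟩
  · calc
      _ ≤ 3 * M * C * ((b - a) ^ 2 / 24 + 1 / 2 * ((b - a) ^ 2 / 4)) :=
        mul_le_mul_of_nonneg_left (by linarith [sq_sub_midpoint_le hx]) (hM.trans h_le)
      _ = M * (b - a) ^ 2 / 2 * C := by ring
  · have h_midpoint := h_general_point ((a + b) / 2) ⟨by linarith, by linarith⟩
    rw [sub_self, mul_zero, zero_mul, add_zero] at h_midpoint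
    exact h_midpoint.trans_eq (by ring)

theorem stmt15 (a b : ℝ) (ha : 0 < a) (hab : a < b) (s : ℝ) (hs : s ∈ Set.Ioo (0:ℝ) 1)
    (M : ℝ) (hM : 0 < M) (hbd : ∀ u ∈ Set.Icc a b, s * (1 - s) * u ^ (s - 2) ≤ M) :
    (∀ x ∈ Set.Icc a b,
        |(b ^ (s + 1) - a ^ (s + 1)) / ((s + 1) * (b - a)) - x ^ s + s * (x - ((a + b) / 2)) * x ^ (s - 1)|
            ≤ 3 * M * ((s ^ 2 + 3 * s + 4) / ((s + 1) * (s + 2) * (s + 3))) *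
                ((b - a) ^ 2 / 24 + (1 / 2) * (x - ((a + b) / 2)) ^ 2)
          ∧ 3 * M * ((s ^ 2 + 3 * s + 4) / ((s + 1) * (s + 2) * (s + 3))) *
                ((b - a) ^ 2 / 24 + (1 / 2) * (x - ((a + b) / 2)) ^ 2)
            ≤ M * (b - a) ^ 2 / 2 * ((s ^ 2 + 3 * s + 4) / ((s + 1) * (s + 2) * (s + 3))))
      ∧ |(b ^ (s + 1) - a ^ (s + 1)) / ((s + 1) * (b - a)) - ((a + b) / 2) ^ s|
          ≤ M * (b - a) ^ 2 / 8 * ((s ^ 2 + 3 * s + 4) / ((s + 1) * (s + 2) * (s + 3))) :=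
  stmt15_general ha hab ⟨by linarith [hs.1], hs.2.le⟩
    (by rwa [abs_of_pos (mul_pos hs.1 (sub_pos.2 hs.2))])
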